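/- Mutual information nonnegativity: Let ρ be a density matrix on ℂ^d ⊗ ℂ^e (positive semidefinite, trace 1) with partial traces ρ_1 = Tr_2 ρ and ρ_2 = Tr_1 ρ. Then S(ρ_1) + S(ρ_2) − S(ρ) ≥ 0, where S(ρ) = −Tr(ρ log ρ) is the von Neumann entropy, with equality if and only if ρ = ρ_1 ⊗ ρ_2. -/

import Mathlib

open Matrix
open scoped ComplexOrder

noncomputable def vnEntropy {ι : Type*} [Fintype ι] [DecidableEq ι] {ρ : Matrix ι ι ℂ}
    (hρ : ρ.IsHermitian) : ℝ :=
  - ∑ i, hρ.eigenvalues i * Real.log (hρ.eigenvalues i)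

noncomputable def ptrace2 {d e : ℕ} (ρ : Matrix (Fin d × Fin e) (Fin d × Fin e) ℂ) :
    Matrix (Fin d) (Fin d) ℂ := fun a b => ∑ x, ρ (a, x) (b, x)

noncomputable def ptrace1 {d e : ℕ} (ρ : Matrix (Fin d × Fin e) (Fin d × Fin e) ℂ) :
    Matrix (Fin e) (Fin e) ℂ := fun x y => ∑ a, ρ (a, x) (a, y)

open scoped Kronecker

lemma mi_term {w p q r : ℝ} (hw : 0 ≤ w) (hp : 0 ≤ p) (hq : 0 ≤ q) (hr : 0 ≤ r)
    (hq0 : q = 0 → w * p = 0) (hr0 : r = 0 → w * p = 0) :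
    0 ≤ w * (p * Real.log p - p * Real.log q - p * Real.log r - p + q * r) ∧
    (w * (p * Real.log p - p * Real.log q - p * Real.log r - p + q * r) = 0 ↔
      w * (p - q * r) = 0) := by
  rcases hw.eq_or_lt with rfl | hw
  · simp
  rcases hp.eq_or_lt with rfl | hp
  · constructor
    · simp; positivity
    · simp
  have hq' : 0 < q := lt_of_le_of_ne hq (fun h => by
    have := hq0 h.symm; have := mul_pos hw hp; linarith)
  have hr' : 0 < r := lt_of_le_of_ne hr (fun h => by
    have := hr0 h.symm; have := mul_pos hw hp; linarith)
  have hs : 0 < q * r := mul_pos hq' hr'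
  have hl : Real.log (q * r / p) = Real.log q + Real.log r - Real.log p := by
    rw [Real.log_div hs.ne' hp.ne', Real.log_mul hq'.ne' hr'.ne']
  have hpos : 0 < q * r / p := by positivity
  have key : p * Real.log p - p * Real.log q - p * Real.log r - p + q * r
      = p * ((q * r / p - 1) - Real.log (q * r / p)) := by
    rw [hl]; field_simp; ring
  rw [key]
  constructor
  · have := Real.log_le_sub_one_of_pos hpos
    have h2 : 0 ≤ (q * r / p - 1) - Real.log (q * r / p) := by linarith
    positivity
  · constructor
    · intro h
      by_cases h1 : q * r / p = 1
      · rw [div_eq_one_iff_eq hp.ne'] at h1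
        rw [h1]; simp
      · have := Real.log_lt_sub_one_of_pos hpos h1
        have h2 : 0 < (q * r / p - 1) - Real.log (q * r / p) := by linarith
        have : 0 < w * (p * ((q * r / p - 1) - Real.log (q * r / p))) := by positivity
        linarith
    · intro h
      have h1 : p - q * r = 0 := by
        rcases mul_eq_zero.1 h with h | h
        · linarith
        · exact h
      have h2 : q * r / p = 1 := by
        rw [div_eq_one_iff_eq hp.ne']; linarith
      rw [h2]; simp

lemma mi_classical {α β ι : Type*} [Fintype α] [Fintype β] [Fintype ι]
    (w : α × β → ι → ℝ) (p : ι → ℝ) (q : α → ℝ) (r : β → ℝ)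
    (hw : ∀ k i, 0 ≤ w k i) (hp : ∀ i, 0 ≤ p i)
    (hrow : ∀ k, ∑ i, w k i = 1) (hcol : ∀ i, ∑ k, w k i = 1) (hsum : ∑ i, p i = 1)
    (hq : ∀ a, ∑ b, ∑ i, w (a, b) i * p i = q a)
    (hr : ∀ b, ∑ a, ∑ i, w (a, b) i * p i = r b) :
    0 ≤ -(∑ a, q a * Real.log (q a)) + -(∑ b, r b * Real.log (r b))
        - -(∑ i, p i * Real.log (p i)) ∧
    (-(∑ a, q a * Real.log (q a)) + -(∑ b, r b * Real.log (r b))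
        - -(∑ i, p i * Real.log (p i)) = 0 ↔ ∀ k i, w k i * (p i - q k.1 * r k.2) = 0) := by
  have hwp : ∀ k i, 0 ≤ w k i * p i := fun k i => mul_nonneg (hw k i) (hp i)
  have hq0 : ∀ a, 0 ≤ q a := fun a => by
    rw [← hq]; exact Finset.sum_nonneg fun b _ => Finset.sum_nonneg fun i _ => hwp _ _
  have hr0 : ∀ a, 0 ≤ r a := fun a => by
    rw [← hr]; exact Finset.sum_nonneg fun b _ => Finset.sum_nonneg fun i _ => hwp _ _
  have hqz : ∀ k : α × β, ∀ i, q k.1 = 0 → w k i * p i = 0 := by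
    rintro ⟨a, b⟩ i h
    rw [← hq, Finset.sum_eq_zero_iff_of_nonneg
      (fun b _ => Finset.sum_nonneg fun i _ => hwp _ _)] at h
    have h2 := h b (Finset.mem_univ _)
    rw [Finset.sum_eq_zero_iff_of_nonneg (fun i _ => hwp _ _)] at h2
    exact h2 i (Finset.mem_univ _)
  have hrz : ∀ k : α × β, ∀ i, r k.2 = 0 → w k i * p i = 0 := by
    rintro ⟨a, b⟩ i h
    rw [← hr, Finset.sum_eq_zero_iff_of_nonneg
      (fun b _ => Finset.sum_nonneg fun i _ => hwp _ _)] at h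
    have h2 := h a (Finset.mem_univ _)
    rw [Finset.sum_eq_zero_iff_of_nonneg (fun i _ => hwp _ _)] at h2
    exact h2 i (Finset.mem_univ _)
  have T := fun k i => mi_term (hw k i) (hp i) (hq0 k.1) (hr0 k.2) (hqz k i) (hrz k i)
  have e1 : ∑ k : α × β, ∑ i, w k i * (p i * Real.log (p i)) = ∑ i, p i * Real.log (p i) := by
    rw [Finset.sum_comm]
    refine Finset.sum_congr rfl fun i _ => ?_
    rw [← Finset.sum_mul, hcol, one_mul]
  have e2 : ∑ k : α × β, ∑ i, w k i * p i = 1 := by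
    rw [Finset.sum_comm, ← hsum]
    refine Finset.sum_congr rfl fun i _ => ?_
    rw [← Finset.sum_mul, hcol, one_mul]
  have e3 : ∑ k : α × β, ∑ i, w k i * p i * Real.log (q k.1) = ∑ a, q a * Real.log (q a) := by
    rw [Fintype.sum_prod_type]
    refine Finset.sum_congr rfl fun a _ => ?_
    simp_rw [← Finset.sum_mul, hq]
  have e4 : ∑ k : α × β, ∑ i, w k i * p i * Real.log (r k.2) = ∑ a, r a * Real.log (r a) := by
    rw [Fintype.sum_prod_type_right]
    refine Finset.sum_congr rfl fun a _ => ?_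
    simp_rw [← Finset.sum_mul, hr]
  have sq : ∑ a, q a = 1 := by
    rw [← e2, Fintype.sum_prod_type]; exact Finset.sum_congr rfl fun a _ => (hq a).symm
  have sr : ∑ a, r a = 1 := by
    rw [← e2, Fintype.sum_prod_type_right]; exact Finset.sum_congr rfl fun a _ => (hr a).symm
  have e5 : ∑ k : α × β, ∑ i, w k i * (q k.1 * r k.2) = 1 := by
    simp_rw [← Finset.sum_mul, hrow, one_mul]
    rw [Fintype.sum_prod_type]
    simp_rw [← Finset.mul_sum, sr, mul_one, sq]
  have E : -(∑ a, q a * Real.log (q a)) + -(∑ b, r b * Real.log (r b))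
        - -(∑ i, p i * Real.log (p i)) = ∑ k : α × β, ∑ i, w k i *
        (p i * Real.log (p i) - p i * Real.log (q k.1) - p i * Real.log (r k.2) - p i
          + q k.1 * r k.2) := by
    have : ∀ (k : α × β) i, w k i *
        (p i * Real.log (p i) - p i * Real.log (q k.1) - p i * Real.log (r k.2) - p i
          + q k.1 * r k.2) = w k i * (p i * Real.log (p i)) - w k i * p i * Real.log (q k.1)
          - w k i * p i * Real.log (r k.2) - w k i * p i + w k i * (q k.1 * r k.2) := by
      intro k i; ring
    simp_rw [this, Finset.sum_add_distrib, Finset.sum_sub_distrib, e1, e2, e3, e4, e5]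
    ring
  rw [E]
  refine ⟨Finset.sum_nonneg fun k _ => Finset.sum_nonneg fun i _ => (T k i).1, ?_⟩
  rw [Finset.sum_eq_zero_iff_of_nonneg
    (fun k _ => Finset.sum_nonneg fun i _ => (T k i).1)]
  constructor
  · intro h k i
    have h2 := h k (Finset.mem_univ _)
    rw [Finset.sum_eq_zero_iff_of_nonneg (fun i _ => (T k i).1)] at h2
    exact (T k i).2.1 (h2 i (Finset.mem_univ _))
  · intro h k _
    exact Finset.sum_eq_zero fun i _ => (T k i).2.2 (h k i)

lemma mi_trace2 {d e : ℕ} (X : Matrix (Fin d × Fin e) (Fin d × Fin e) ℂ)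
    (A : Matrix (Fin d) (Fin d) ℂ) :
    (X * (A ⊗ₖ (1 : Matrix (Fin e) (Fin e) ℂ))).trace = (ptrace2 X * A).trace := by
  simp only [Matrix.trace, Matrix.diag, Matrix.mul_apply, Fintype.sum_prod_type, ptrace2,
    Matrix.kroneckerMap_apply, Matrix.one_apply, mul_ite, mul_one, mul_zero,
    Finset.sum_ite_eq', Finset.mem_univ, if_true, Finset.sum_mul]
  refine Finset.sum_congr rfl fun a _ => ?_
  rw [Finset.sum_comm]

lemma mi_trace1 {d e : ℕ} (X : Matrix (Fin d × Fin e) (Fin d × Fin e) ℂ)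
    (A : Matrix (Fin e) (Fin e) ℂ) :
    (X * ((1 : Matrix (Fin d) (Fin d) ℂ) ⊗ₖ A)).trace = (ptrace1 X * A).trace := by
  simp only [Matrix.trace, Matrix.diag, Matrix.mul_apply, Fintype.sum_prod_type_right, ptrace1,
    Matrix.kroneckerMap_apply, Matrix.one_apply, ite_mul, mul_ite, one_mul, zero_mul, mul_zero,
    Finset.sum_ite_eq', Finset.mem_univ, if_true, Finset.sum_mul]
  refine Finset.sum_congr rfl fun a _ => ?_
  rw [Finset.sum_comm]

lemma mi_spec {ι : Type*} [Fintype ι] [DecidableEq ι] {A : Matrix ι ι ℂ} (hA : A.IsHermitian) :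
    ∃ U : Matrix ι ι ℂ, Uᴴ * U = 1 ∧ U * Uᴴ = 1 ∧
      A = U * diagonal (fun i => (hA.eigenvalues i : ℂ)) * Uᴴ := by
  refine ⟨hA.eigenvectorUnitary, ?_, ?_, ?_⟩
  · exact Unitary.coe_star_mul_self _
  · exact Unitary.coe_mul_star_self _
  · exact hA.spectral_theorem

theorem mutual_information_nonneg {d e : ℕ}
    (ρ : Matrix (Fin d × Fin e) (Fin d × Fin e) ℂ)
    (hρ : ρ.PosSemidef) (htr : ρ.trace = 1)
    (h1 : (ptrace2 ρ).IsHermitian) (h2 : (ptrace1 ρ).IsHermitian) :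
    0 ≤ vnEntropy h1 + vnEntropy h2 - vnEntropy hρ.1 ∧
    (vnEntropy h1 + vnEntropy h2 - vnEntropy hρ.1 = 0 ↔
      ρ = Matrix.kroneckerMap (· * ·) (ptrace2 ρ) (ptrace1 ρ)) := by
  have hp := hρ.eigenvalues_nonneg
  have hsum : ∑ i, hρ.1.eigenvalues i = 1 := by
    have := hρ.1.trace_eq_sum_eigenvalues
    rw [htr] at this
    have h3 := congrArg Complex.re this
    simpa using h3.symm
  obtain ⟨U, hU, hU', eU⟩ := mi_spec hρ.1
  obtain ⟨V, hV, hV', eV⟩ := mi_spec h1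
  obtain ⟨W, hW, hW', eW⟩ := mi_spec h2
  unfold vnEntropy
  generalize hρ.1.eigenvalues = p at *
  generalize h1.eigenvalues = q at *
  generalize h2.eigenvalues = r at *
  set P : Matrix (Fin d × Fin e) (Fin d × Fin e) ℂ := diagonal (fun i => (p i : ℂ)) with hP
  set M := V ⊗ₖ W with hM
  have hMM : Mᴴ * M = 1 := by
    rw [hM, conjTranspose_kronecker, ← mul_kronecker_mul, hV, hW, one_kronecker_one]
  have hMM' : M * Mᴴ = 1 := by
    rw [hM, conjTranspose_kronecker, ← mul_kronecker_mul, hV', hW', one_kronecker_one]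
  set T := Mᴴ * U with hT
  have hTT : Tᴴ * T = 1 := by
    rw [hT, conjTranspose_mul, conjTranspose_conjTranspose, Matrix.mul_assoc,
      ← Matrix.mul_assoc M, hMM', Matrix.one_mul, hU]
  have hTT' : T * Tᴴ = 1 := by
    rw [hT, conjTranspose_mul, conjTranspose_conjTranspose, Matrix.mul_assoc,
      ← Matrix.mul_assoc U, hU', Matrix.one_mul, hMM]
  have hMU : M * T = U := by rw [hT, ← Matrix.mul_assoc, hMM', Matrix.one_mul]
  have hD : Mᴴ * ρ * M = T * P * Tᴴ := by
    rw [hT, conjTranspose_mul, conjTranspose_conjTranspose]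
    conv_lhs => rw [eU]
    simp only [Matrix.mul_assoc]
  have hDkk : ∀ k, (Mᴴ * ρ * M) k k = ((∑ i, Complex.normSq (T k i) * p i : ℝ) : ℂ) := by
    intro k
    rw [hD, Matrix.mul_apply]
    push_cast
    refine Finset.sum_congr rfl fun i _ => ?_
    rw [hP, Matrix.mul_diagonal, conjTranspose_apply, Complex.normSq_eq_conj_mul_self]
    simp only [Complex.star_def]
    ring
  have hVq : Vᴴ * ptrace2 ρ * V = diagonal (fun i => (q i : ℂ)) := by
    conv_lhs => rw [eV]
    rw [Matrix.mul_assoc, Matrix.mul_assoc _ Vᴴ, hV, Matrix.mul_one, ← Matrix.mul_assoc, hV,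
      Matrix.one_mul]
  have hWr : Wᴴ * ptrace1 ρ * W = diagonal (fun i => (r i : ℂ)) := by
    conv_lhs => rw [eW]
    rw [Matrix.mul_assoc, Matrix.mul_assoc _ Wᴴ, hW, Matrix.mul_one, ← Matrix.mul_assoc, hW,
      Matrix.one_mul]
  have hq : ∀ a, ∑ b, ∑ i, Complex.normSq (T (a, b) i) * p i = q a := by
    intro a
    have s1 : ((Mᴴ * ρ * M) * (single a a (1:ℂ) ⊗ₖ (1 : Matrix (Fin e) (Fin e) ℂ))).trace
        = ∑ b, (Mᴴ * ρ * M) (a, b) (a, b) := by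
      rw [mi_trace2, Matrix.trace_mul_single]
      simp [ptrace2]
    have s2 : ((Mᴴ * ρ * M) * (single a a (1:ℂ) ⊗ₖ (1 : Matrix (Fin e) (Fin e) ℂ))).trace
        = q a := by
      have : M * (single a a (1:ℂ) ⊗ₖ (1 : Matrix (Fin e) (Fin e) ℂ)) * Mᴴ
          = (V * single a a (1:ℂ) * Vᴴ) ⊗ₖ (1 : Matrix (Fin e) (Fin e) ℂ) := by
        rw [hM, conjTranspose_kronecker, ← mul_kronecker_mul, ← mul_kronecker_mul,
          Matrix.mul_one, hW']
      rw [Matrix.mul_assoc, Matrix.mul_assoc, Matrix.trace_mul_comm, Matrix.mul_assoc, this,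
        mi_trace2, ← Matrix.mul_assoc, Matrix.trace_mul_comm, ← Matrix.mul_assoc,
        ← Matrix.mul_assoc, hVq, Matrix.trace_mul_single]
      simp
    rw [s1] at s2
    simp_rw [hDkk] at s2
    exact_mod_cast s2
  have hr : ∀ b, ∑ a, ∑ i, Complex.normSq (T (a, b) i) * p i = r b := by
    intro a
    have s1 : ((Mᴴ * ρ * M) * ((1 : Matrix (Fin d) (Fin d) ℂ) ⊗ₖ single a a (1:ℂ))).trace
        = ∑ b, (Mᴴ * ρ * M) (b, a) (b, a) := by
      rw [mi_trace1, Matrix.trace_mul_single]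
      simp [ptrace1]
    have s2 : ((Mᴴ * ρ * M) * ((1 : Matrix (Fin d) (Fin d) ℂ) ⊗ₖ single a a (1:ℂ))).trace
        = r a := by
      have : M * ((1 : Matrix (Fin d) (Fin d) ℂ) ⊗ₖ single a a (1:ℂ)) * Mᴴ
          = (1 : Matrix (Fin d) (Fin d) ℂ) ⊗ₖ (W * single a a (1:ℂ) * Wᴴ) := by
        rw [hM, conjTranspose_kronecker, ← mul_kronecker_mul, ← mul_kronecker_mul,
          Matrix.mul_one, hV']
      rw [Matrix.mul_assoc, Matrix.mul_assoc, Matrix.trace_mul_comm, Matrix.mul_assoc, this,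
        mi_trace1, ← Matrix.mul_assoc, Matrix.trace_mul_comm, ← Matrix.mul_assoc,
        ← Matrix.mul_assoc, hWr, Matrix.trace_mul_single]
      simp
    rw [s1] at s2
    simp_rw [hDkk] at s2
    exact_mod_cast s2
  have hrow : ∀ k, ∑ i, Complex.normSq (T k i) = 1 := by
    intro k
    have := congrFun (congrFun hTT' k) k
    rw [Matrix.mul_apply, Matrix.one_apply_eq] at this
    simp_rw [conjTranspose_apply, Complex.star_def, Complex.mul_conj] at this
    exact_mod_cast this
  have hcol : ∀ i, ∑ k, Complex.normSq (T k i) = 1 := by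
    intro k
    have := congrFun (congrFun hTT k) k
    rw [Matrix.mul_apply, Matrix.one_apply_eq] at this
    simp_rw [conjTranspose_apply, Complex.star_def, ← Complex.normSq_eq_conj_mul_self] at this
    exact_mod_cast this
  have main := mi_classical (fun k i => Complex.normSq (T k i)) p q r
    (fun k i => Complex.normSq_nonneg _) hp hrow hcol hsum hq hr
  refine ⟨main.1, main.2.trans ?_⟩
  set Q : Matrix (Fin d × Fin e) (Fin d × Fin e) ℂ :=
    diagonal (fun k => ((q k.1 : ℂ) * (r k.2 : ℂ))) with hQ
  have hQK : ptrace2 ρ ⊗ₖ ptrace1 ρ = M * Q * Mᴴ := by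
    conv_lhs => rw [eV, eW]
    rw [mul_kronecker_mul, mul_kronecker_mul, diagonal_kronecker_diagonal,
      ← conjTranspose_kronecker]
  have step : (∀ k i, Complex.normSq (T k i) * (p i - q k.1 * r k.2) = 0) ↔ T * P = Q * T := by
    rw [← Matrix.ext_iff]
    refine forall_congr' fun k => forall_congr' fun i => ?_
    rw [hP, hQ, Matrix.mul_diagonal, Matrix.diagonal_mul, mul_eq_zero, Complex.normSq_eq_zero,
      ← sub_eq_zero (b := (q k.1 * r k.2 : ℂ) * T k i)]
    have : T k i * (p i : ℂ) - (q k.1 * r k.2 : ℂ) * T k i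
      = T k i * ((p i - q k.1 * r k.2 : ℝ) : ℂ) := by push_cast; ring
    rw [this, mul_eq_zero, Complex.ofReal_eq_zero]
  rw [step]
  change _ ↔ ρ = ptrace2 ρ ⊗ₖ ptrace1 ρ
  rw [hQK]
  constructor
  · intro h
    rw [eU, ← hMU, conjTranspose_mul, Matrix.mul_assoc M, h]
    simp only [Matrix.mul_assoc]
    rw [← Matrix.mul_assoc T, hTT', Matrix.one_mul]
  · intro h
    have h3 : T * P * Tᴴ = Q := by
      rw [← hD, h]
      simp only [Matrix.mul_assoc]
      rw [hMM, Matrix.mul_one, ← Matrix.mul_assoc, hMM, Matrix.one_mul]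
    rw [← h3, Matrix.mul_assoc (T * P), hTT, Matrix.mul_one]
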